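/- Let b > 0, let (n_k)_{k∈ℤ} be an increasing sequence of integers, let (κ_k)_{k∈ℤ} ∈ ℓ² be complex, and set z_k = n_k + κ_k. Assume equal values among the z_k are neighboring, i.e. whenever z_k has multiplicity m_k in the sequence, z_k = z_{k+1} = … = z_{k+m_k−1}; let S = {k ∈ ℤ : z_k ≠ z_{k−1}} and define e_{k+ν}(x) = x^ν · exp(i z_k x) for k ∈ S and ν = 0, …, m_k − 1. Then the system {e_k}_{k∈ℤ} is a Riesz basis of L²(−b, b) if and only if the system {exp(i n_k x)}_{k∈ℤ} is a Riesz basis of L²(−b, b). -/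

import Mathlib

/-!
The exponents `z k = n k + κ k` and `n k` are quadratically close, and the Riesz basis property is
shown to pass between any two sequences of exponents of the form `n + κ`, `n + κ'` with
`κ, κ' ∈ ℓ²` (`riesz_transfer`); taking one of the perturbations to be `0` gives both directions.

Only finitely many indices carry multiplicities or large perturbations. Hence one can interpolate
by a system that has the old exponents on a large finite set and the new ones elsewhere. It differs
from the old system by an arbitrarily small amount in the `ℓ²` sense, so it is again a Riesz basis
(`IsRiesz.exists_perturb`). It differs from the new system in finitely many vectors, so by the
Fredholm alternative the new system is a Riesz basis as soon as it is complete
(`IsRiesz.of_finite_change`).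

Completeness survives the change of finitely many exponents, one at a time
(`CompleteMult.exchange`). Suppose `h` annihilates the system in which the exponent `l₀` has been
replaced by `w`. The Fourier transform `ĥ` vanishes at `w`, and `ĥ(z) (z - l₀) / (z - w)` is the
transform of the function `ψ = h + i (l₀ - w) φ`, where `φ' + i w φ = h` and `φ(±b) = 0`. This `ψ`
annihilates the original system, so it is zero, and then `h` solves a homogeneous Volterra
equation and vanishes. Multiplicities are handled by the relation
`⟨ψ, (D - i w) p⟩ = ⟨h, (D - i l₀) p⟩` applied to exponential monomials `p`.
-/

open MeasureTheory Set

/-- A system of functions indexed by `ℤ` is a Riesz basis of `L²(−b, b)` if it is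
the image of an orthonormal (Hilbert) basis under a bounded linear operator with
bounded inverse. -/
def SystemRieszBasis (b : ℝ) (f : ℤ → ℝ → ℂ) : Prop :=
  ∃ (u : HilbertBasis ℤ ℂ (Lp ℂ 2 (volume.restrict (Ioo (-b) b))))
    (T : Lp ℂ 2 (volume.restrict (Ioo (-b) b)) ≃L[ℂ]
         Lp ℂ 2 (volume.restrict (Ioo (-b) b))),
    ∀ k : ℤ, ((T (u k) : Lp ℂ 2 (volume.restrict (Ioo (-b) b))) : ℝ → ℂ)
      =ᵐ[volume.restrict (Ioo (-b) b)] f k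

/-! ### Riesz bases in an abstract Hilbert space -/

section Abstract

set_option linter.unusedSectionVars false

variable {H : Type*} [NormedAddCommGroup H] [InnerProductSpace ℂ H] [CompleteSpace H]

/-- Riesz bases of an abstract Hilbert space, with invertibility of the operator expressed as
being a unit of the ring of bounded operators. -/
def IsRiesz (F : ℤ → H) : Prop :=
  ∃ (u : HilbertBasis ℤ ℂ H) (T : H →L[ℂ] H), IsUnit T ∧ ∀ k, T (u k) = F k

/-- A system is total if only the zero vector is orthogonal to it. -/
def TotalSystem (F : ℤ → H) : Prop := ∀ h : H, (∀ k, inner ℂ h (F k) = 0) → h = 0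

lemma eq_zero_of_inner_hilbertBasis (u : HilbertBasis ℤ ℂ H) (h : H)
    (hu : ∀ k, inner ℂ h (u k) = 0) : h = 0 := by
  have := u.tsum_inner_mul_inner h h
  simpa [hu] using this.symm

lemma IsRiesz.totalSystem {F : ℤ → H} (hF : IsRiesz F) : TotalSystem F := by
  obtain ⟨u, T, hT, hTF⟩ := hF
  intro h hh
  have h1 : ContinuousLinearMap.adjoint T h = 0 := by
    apply eq_zero_of_inner_hilbertBasis u
    intro k
    rw [ContinuousLinearMap.adjoint_inner_left, hTF, hh]
  have h2 : IsUnit (ContinuousLinearMap.adjoint T) := by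
    rw [← ContinuousLinearMap.star_eq_adjoint]; exact hT.star
  have h3 := (ContinuousLinearMap.isUnit_iff_bijective.1 h2).1
  exact h3 (by simpa using h1)

/-- A square-summable sequence of vectors is the image of an orthonormal basis under a
(Hilbert–Schmidt) operator whose norm is controlled by the sum of squares. -/
lemma exists_clm_of_summable (u : HilbertBasis ℤ ℂ H) (s : ℤ → H)
    (hs : Summable fun k => ‖s k‖ ^ 2) :
    ∃ S : H →L[ℂ] H, (∀ k, S (u k) = s k) ∧ ‖S‖ ≤ √(∑' k, ‖s k‖ ^ 2) := by
  have hpar : ∀ x : H, HasSum (fun k => ‖inner ℂ (u k) x‖ ^ 2) (‖x‖ ^ 2) := by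
    intro x
    have h := u.hasSum_inner_mul_inner x x
    have h2 := Complex.hasSum_re h
    convert h2 using 1
    · funext k
      rw [← inner_conj_symm x, mul_comm, Complex.mul_conj, Complex.normSq_eq_norm_sq,
        Complex.ofReal_re]
    · have := inner_self_eq_norm_sq (𝕜 := ℂ) x
      simpa using this.symm
  have hCS : ∀ x : H, Summable (fun k => ‖inner ℂ (u k) x‖ * ‖s k‖) ∧
      ∑' k, ‖inner ℂ (u k) x‖ * ‖s k‖ ≤ ‖x‖ * √(∑' k, ‖s k‖ ^ 2) := by
    intro x
    have := Real.summable_and_inner_le_Lp_mul_Lq_tsum_of_nonneg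
      (f := fun k => ‖inner ℂ (u k) x‖) (g := fun k => ‖s k‖) Real.HolderConjugate.two_two
      (fun _ => norm_nonneg _) (fun _ => norm_nonneg _)
      (by simpa using (hpar x).summable) (by simpa using hs)
    refine ⟨this.1, this.2.trans_eq ?_⟩
    simp only [Real.rpow_two, (hpar x).tsum_eq]
    rw [← Real.sqrt_eq_rpow, ← Real.sqrt_eq_rpow, Real.sqrt_sq (norm_nonneg _)]
  have hsum : ∀ x : H, Summable (fun k => inner ℂ (u k) x • s k) := by
    intro x
    apply Summable.of_norm
    simpa [norm_smul] using (hCS x).1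
  let L : H →ₗ[ℂ] H :=
    { toFun := fun x => ∑' k, inner ℂ (u k) x • s k
      map_add' := by
        intro x y
        rw [← (hsum x).tsum_add (hsum y)]
        simp [add_smul]
      map_smul' := by
        intro c x
        rw [RingHom.id_apply, ← (hsum x).tsum_const_smul]
        simp [mul_smul] }
  have hL : ∀ x, ‖L x‖ ≤ √(∑' k, ‖s k‖ ^ 2) * ‖x‖ := by
    intro x
    have h1 : ‖∑' k, inner ℂ (u k) x • s k‖ ≤ ∑' k, ‖inner ℂ (u k) x • s k‖ :=
      norm_tsum_le_tsum_norm (by simpa [norm_smul] using (hCS x).1)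
    rw [mul_comm]
    refine h1.trans ?_
    simpa [norm_smul] using (hCS x).2
  refine ⟨L.mkContinuous _ hL, ?_, L.mkContinuous_norm_le (Real.sqrt_nonneg _) hL⟩
  intro k
  show ∑' j, inner ℂ (u j) (u k) • s j = s k
  rw [tsum_eq_single k]
  · have := u.orthonormal.1 k
    rw [inner_self_eq_norm_sq_to_K, this]; simp
  · intro j hj
    rw [u.orthonormal.2 hj, zero_smul]

/-- Riesz bases are stable under small quadratic perturbations: invertible operators form an
open set. -/
lemma IsRiesz.exists_perturb {F : ℤ → H} (hF : IsRiesz F) :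
    ∃ ε > 0, ∀ G : ℤ → H, Summable (fun k => ‖G k - F k‖ ^ 2) →
      ∑' k, ‖G k - F k‖ ^ 2 < ε → IsRiesz G := by
  obtain ⟨u, T, hT, hTF⟩ := hF
  obtain ⟨ε, hε, hball⟩ := Metric.isOpen_iff.1 (Units.isOpen (R := H →L[ℂ] H)) T hT
  refine ⟨ε ^ 2, by positivity, fun G hs hlt => ?_⟩
  obtain ⟨S, hS, hSn⟩ := exists_clm_of_summable u _ hs
  refine ⟨u, T + S, hball ?_, fun k => by simp [hTF, hS]⟩
  rw [Metric.mem_ball, dist_eq_norm, add_sub_cancel_left]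
  refine hSn.trans_lt ?_
  rw [Real.sqrt_lt' hε]
  exact hlt

/-- A total system that differs from a Riesz basis in finitely many places is a Riesz basis.
The two systems are related by `T + R` with `T` invertible and `R` of finite rank; totality says
that `(T + R)*` is injective, and the Fredholm alternative makes it invertible. -/
lemma IsRiesz.of_finite_change {F G : ℤ → H} (hF : IsRiesz F) (A : Finset ℤ)
    (hA : ∀ k ∉ A, G k = F k) (hG : TotalSystem G) : IsRiesz G := by
  obtain ⟨u, T, hT, hTF⟩ := hF
  let R : H →L[ℂ] H := ∑ k ∈ A, InnerProductSpace.rankOne ℂ (G k - F k) (u k)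
  have hRu : ∀ k, (T + R) (u k) = G k := by
    intro k
    have h1 : R (u k) = ∑ j ∈ A, inner ℂ (u j) (u k) • (G j - F j) := by
      simp [R, smul_sub]
    rw [add_apply, hTF, h1]
    by_cases hk : k ∈ A
    · rw [Finset.sum_eq_single_of_mem k hk]
      · rw [inner_self_eq_norm_sq_to_K, u.orthonormal.1 k]; simp
      · intro j _ hj
        rw [u.orthonormal.2 hj, zero_smul]
    · rw [Finset.sum_eq_zero, hA k hk, add_zero]
      intro j hj
      rw [u.orthonormal.2 (show j ≠ k from fun h => hk (h ▸ hj)), zero_smul]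
  refine ⟨u, T + R, ?_, hRu⟩
  have hinj : ∀ h, star (T + R) h = 0 → h = 0 := by
    intro h hh
    apply hG
    intro k
    rw [← hRu, ← ContinuousLinearMap.adjoint_inner_left, ← ContinuousLinearMap.star_eq_adjoint, hh,
      inner_zero_left]
  have hRc : IsCompactOperator (star R : H →L[ℂ] H) := by
    have : star R ∈ compactOperator (RingHom.id ℂ) H H := by
      have h1 : star R = ∑ k ∈ A, InnerProductSpace.rankOne ℂ (u k) (G k - F k) := by
        simp [R, ContinuousLinearMap.star_eq_adjoint, InnerProductSpace.adjoint_rankOne]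
      rw [h1]
      refine Submodule.sum_mem _ fun k _ => ?_
      show IsCompactOperator _
      rw [InnerProductSpace.rankOne_def']
      exact (isCompactOperator_of_locallyCompactSpace_dom (innerSL ℂ (G k - F k))).clm_comp
        (ContinuousLinearMap.toSpanSingleton ℂ (u k))
    exact this
  obtain ⟨V, hV⟩ := hT.star
  have hfac : star (T + R) = (V : H →L[ℂ] H) * (1 + (↑V⁻¹ : H →L[ℂ] H) * star R) := by
    rw [mul_add, ← mul_assoc, Units.mul_inv, hV, star_add, mul_one, one_mul]
  have hC : IsCompactOperator ((↑V⁻¹ : H →L[ℂ] H) * star R : H →L[ℂ] H) := hRc.clm_comp (↑V⁻¹ : H →L[ℂ] H)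
  have hunit : IsUnit (1 + (↑V⁻¹ : H →L[ℂ] H) * star R) := by
    rcases hC.hasEigenvalue_or_mem_resolventSet (μ := -1) (by norm_num) with h | h
    · exfalso
      obtain ⟨v, hv⟩ := h.exists_hasEigenvector
      apply hv.2
      apply hinj
      have := hv.apply_eq_smul
      rw [hfac, mul_apply_eq_comp, add_apply]
      have h2 : ((↑V⁻¹ : H →L[ℂ] H) * star R) v = (-1 : ℂ) • v := this
      rw [h2]; simp
    · rw [resolventSet, Set.mem_ofPred_eq] at h
      have h2 := h.neg
      convert h2 using 1
      simp; abel
  have := (hfac ▸ (V.isUnit.mul hunit) : IsUnit (star (T + R))).star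
  simpa using this

end Abstract

/-! ### Exponential monomials and the exchange of one exponent -/

/-- The exponential monomial `x ↦ x ^ ν * exp (i l x)`. -/
noncomputable def expMono (l : ℂ) (ν : ℕ) (x : ℝ) : ℂ :=
  (x : ℂ) ^ ν * Complex.exp (Complex.I * l * (x : ℂ))

lemma continuous_expMono (l : ℂ) (ν : ℕ) : Continuous (expMono l ν) := by
  unfold expMono; fun_prop

lemma hasDerivAt_expMono (l : ℂ) (ν : ℕ) (x : ℝ) :
    HasDerivAt (expMono l ν)
      (Complex.I * l * expMono l ν x + ν * expMono l (ν - 1) x) x := by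
  have h1 : HasDerivAt (fun y : ℂ => y ^ ν * Complex.exp (Complex.I * l * y))
      (ν * (x : ℂ) ^ (ν - 1) * Complex.exp (Complex.I * l * x) +
        (x : ℂ) ^ ν * (Complex.exp (Complex.I * l * x) * (Complex.I * l * 1))) (x : ℂ) :=
    (hasDerivAt_pow ν (x : ℂ)).mul (((hasDerivAt_id (x : ℂ)).const_mul (Complex.I * l)).cexp)
  have h2 := h1.comp_ofReal
  refine h2.congr_deriv ?_
  simp only [expMono]
  ring

/-- Lebesgue measure on the interval `(-b, b)`. -/
noncomputable abbrev ivl (b : ℝ) : Measure ℝ := volume.restrict (Ioo (-b) b)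

lemma integrable_mul_continuous {b : ℝ} {h g : ℝ → ℂ} (hh : Integrable h (ivl b))
    (hg : Continuous g) : Integrable (fun x => h x * g x) (ivl b) := by
  have hbd : ∃ C, ∀ x ∈ Icc (-b) b, ‖g x‖ ≤ C :=
    isCompact_Icc.exists_bound_of_continuousOn hg.continuousOn
  obtain ⟨C, hC⟩ := hbd
  refine hh.mul_bdd (c := C) hg.aestronglyMeasurable ?_
  filter_upwards [ae_restrict_mem measurableSet_Ioo] with x hx
  exact hC x (Ioo_subset_Icc_self hx)

lemma memLp_of_continuous {b : ℝ} {g : ℝ → ℂ} (hg : Continuous g) : MemLp g 2 (ivl b) := by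
  have hbd : ∃ C, ∀ x ∈ Icc (-b) b, ‖g x‖ ≤ C :=
    isCompact_Icc.exists_bound_of_continuousOn hg.continuousOn
  obtain ⟨C, hC⟩ := hbd
  refine MemLp.of_bound hg.aestronglyMeasurable C ?_
  filter_upwards [ae_restrict_mem measurableSet_Ioo] with x hx
  exact hC x (Ioo_subset_Icc_self hx)

/-- The primitive of `h` on `(-b, b)` that vanishes at `-b`. -/
noncomputable def prim (b : ℝ) (h : ℝ → ℂ) (x : ℝ) : ℂ := ∫ t in Iic x, h t ∂(ivl b)

lemma prim_eq (b : ℝ) {h : ℝ → ℂ} (hh : Integrable h (ivl b)) (x : ℝ) :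
    prim b h x = ∫ t in (-b)..x, (Ioo (-b) b).indicator h t := by
  have hi : Integrable ((Ioo (-b) b).indicator h) :=
    (integrable_indicator_iff measurableSet_Ioo).2 hh
  have h0 : ∫ t in Iic (-b), (Ioo (-b) b).indicator h t = 0 := by
    apply setIntegral_eq_zero_of_forall_eq_zero
    intro t ht
    apply indicator_of_notMem
    intro h'
    exact absurd h'.1 (not_lt.2 ht)
  rw [← intervalIntegral.integral_Iic_sub_Iic hi.integrableOn hi.integrableOn, h0, sub_zero,
    prim, ivl, Measure.restrict_restrict measurableSet_Iic,
    setIntegral_indicator measurableSet_Ioo]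

lemma continuous_prim (b : ℝ) {h : ℝ → ℂ} (hh : Integrable h (ivl b)) :
    Continuous (prim b h) := by
  have hi : Integrable ((Ioo (-b) b).indicator h) :=
    (integrable_indicator_iff measurableSet_Ioo).2 hh
  rw [funext (prim_eq b hh)]
  exact intervalIntegral.continuous_primitive (fun _ _ => hi.intervalIntegrable) _

/-- Integration by parts against a mean-zero integrable function, by Fubini. -/
lemma integral_prim_mul {b : ℝ} {h q q' : ℝ → ℂ} (hh : Integrable h (ivl b))
    (h0 : ∫ t, h t ∂(ivl b) = 0) (hq : ∀ x, HasDerivAt q (q' x) x) (hq' : Continuous q') :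
    ∫ x, prim b h x * q' x ∂(ivl b) = - ∫ x, h x * q x ∂(ivl b) := by
  have hqc : Continuous q := continuous_iff_continuousAt.2 fun x => (hq x).continuousAt
  have hq'i : Integrable q' (ivl b) := (memLp_of_continuous hq').integrable (by norm_num)
  have hint : Integrable (Function.uncurry fun x t : ℝ =>
      ({p : ℝ × ℝ | p.2 ≤ p.1}.indicator (fun p => q' p.1 * h p.2)) (x, t))
      ((ivl b).prod (ivl b)) :=
    (hq'i.mul_prod hh).indicator (measurableSet_le measurable_snd measurable_fst)
  have hswap := integral_integral_swap hint
  have hL : ∀ x, ∫ t, ({p : ℝ × ℝ | p.2 ≤ p.1}.indicator (fun p => q' p.1 * h p.2)) (x, t) ∂(ivl b)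
      = prim b h x * q' x := by
    intro x
    rw [prim, ← integral_indicator measurableSet_Iic, mul_comm, ← integral_const_mul]
    refine integral_congr_ae (Filter.Eventually.of_forall fun t => ?_)
    by_cases ht : t ≤ x <;> simp [indicator, ht]
  have hR : ∀ t ∈ Ioo (-b) b,
      ∫ x, ({p : ℝ × ℝ | p.2 ≤ p.1}.indicator (fun p => q' p.1 * h p.2)) (x, t) ∂(ivl b)
      = h t * q b - h t * q t := by
    intro t ht
    have h1 : ∫ x in t..b, q' x = q b - q t :=
      intervalIntegral.integral_eq_sub_of_hasDerivAt (fun x _ => hq x)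
        (hq'.intervalIntegrable _ _)
    have h2 : ∫ x in t..b, q' x = ∫ x in Ici t, q' x ∂(ivl b) := by
      rw [intervalIntegral.integral_of_le ht.2.le, ivl,
        Measure.restrict_restrict measurableSet_Ici, integral_Ioc_eq_integral_Ioo,
        ← integral_Ico_eq_integral_Ioo]
      congr 2
      ext y
      simp only [mem_Ico, mem_inter_iff, mem_Ici, mem_Ioo]
      constructor
      · rintro ⟨h1, h2⟩; exact ⟨h1, ht.1.trans_le h1, h2⟩
      · rintro ⟨h1, _, h2⟩; exact ⟨h1, h2⟩
    rw [← mul_sub, ← h1, h2, ← integral_indicator measurableSet_Ici, ← integral_const_mul]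
    refine integral_congr_ae (Filter.Eventually.of_forall fun x => ?_)
    by_cases hx : t ≤ x <;> simp [indicator, hx, mul_comm]
  simp only [hL] at hswap
  rw [hswap, setIntegral_congr_fun measurableSet_Ioo hR,
    integral_sub (hh.mul_const _) (integrable_mul_continuous hh hqc), integral_mul_const, h0]
  simp

/-- The Volterra equation `h = -c * prim h` has only the zero solution. -/
lemma eq_zero_of_eq_prim {b : ℝ} {h : ℝ → ℂ} (c : ℂ) (hh : Integrable h (ivl b))
    (heq : h =ᵐ[ivl b] fun x => -c * prim b h x) : h =ᵐ[ivl b] 0 := by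
  have hc := continuous_prim b hh
  set P := prim b h with hP
  let Q : ℝ → ℂ := fun x => ∫ t in (-b)..x, P t
  have hQ : ∀ x, HasDerivAt Q (P x) x := fun x =>
    intervalIntegral.integral_hasDerivAt_right (hc.intervalIntegrable _ _)
      (hc.stronglyMeasurableAtFilter _ _) hc.continuousAt
  have hPQ : ∀ x ∈ Icc (-b) b, P x = -c * Q x := by
    intro x hx
    rw [hP, prim_eq b hh]
    simp only [Q]
    rw [← intervalIntegral.integral_const_mul, intervalIntegral.integral_of_le hx.1,
      intervalIntegral.integral_of_le hx.1, integral_Ioc_eq_integral_Ioo,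
      integral_Ioc_eq_integral_Ioo]
    have hsub : Ioo (-b) x ⊆ Ioo (-b) b := Ioo_subset_Ioo_right hx.2
    refine integral_congr_ae ?_
    have h1 := ae_mono (Measure.restrict_mono hsub le_rfl) heq
    filter_upwards [h1, ae_restrict_mem measurableSet_Ioo] with t ht htm
    rw [indicator_of_mem (hsub htm), ht]
  have hg : ∀ x ∈ Icc (-b) b, Complex.exp (c * x) * Q x = Complex.exp (c * (-b : ℝ)) * Q (-b) := by
    have hd : ∀ x : ℝ, HasDerivAt (fun y : ℝ => Complex.exp (c * y) * Q y)
        (Complex.exp (c * x) * (c * 1) * Q x + Complex.exp (c * x) * P x) x := by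
      intro x
      have : HasDerivAt (fun y : ℝ => Complex.exp (c * y)) (Complex.exp (c * x) * (c * 1)) x :=
        (((hasDerivAt_id (x : ℂ)).const_mul c).cexp).comp_ofReal
      exact this.mul (hQ x)
    apply constant_of_has_deriv_right_zero
    · exact (continuous_iff_continuousAt.2 fun x => (hd x).continuousAt).continuousOn
    · intro x hx
      have := (hd x).hasDerivWithinAt (s := Ici x)
      refine this.congr_deriv ?_
      rw [hPQ x (Ico_subset_Icc_self hx)]
      ring
  filter_upwards [heq, ae_restrict_mem measurableSet_Ioo] with x hx hxm
  have h1 := hg x (Ioo_subset_Icc_self hxm)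
  have h2 : Q (-b) = 0 := by simp [Q]
  rw [h2, mul_zero] at h1
  have h3 : Q x = 0 := (mul_eq_zero.1 h1).resolve_left (Complex.exp_ne_zero _)
  rw [hx, hPQ x (Ioo_subset_Icc_self hxm), h3]
  simp

/-- The system of all `x ^ ν * exp (i l x)` with `ν < m l` has no nonzero annihilator in
`L²(-b, b)`; here `m` gives the multiplicity of each exponent. -/
def CompleteMult (b : ℝ) (m : ℂ → ℕ) : Prop :=
  ∀ h : ℝ → ℂ, MemLp h 2 (ivl b) →
    (∀ l ν, ν < m l → ∫ x, h x * expMono l ν x ∂(ivl b) = 0) → h =ᵐ[ivl b] 0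

/-- Exchanging one exponent `l₀` for another one `w` preserves completeness. If `h` annihilates the
new system, divide its Fourier transform by `z - w` and multiply it by `z - l₀`: on the level of
functions this produces `ψ = h + i (l₀ - w) φ` with `φ' + i w φ = h`, which annihilates the old
system. -/
lemma CompleteMult.exchange {b : ℝ} {m m' : ℂ → ℕ} {l₀ w : ℂ} (hne : l₀ ≠ w)
    (h₀ : m l₀ = m' l₀ + 1) (hw : m' w = m w + 1)
    (hoth : ∀ l, l ≠ l₀ → l ≠ w → m' l = m l) (hm : CompleteMult b m) : CompleteMult b m' := by
  intro h hL hann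
  have hI : Integrable h (ivl b) := hL.integrable (by norm_num)
  set k : ℝ → ℂ := fun x => h x * expMono w 0 x with hk
  have hkI : Integrable k (ivl b) := integrable_mul_continuous hI (continuous_expMono _ _)
  have hk0 : ∫ x, k x ∂(ivl b) = 0 := hann w 0 (by omega)
  have hPc := continuous_prim b hkI
  set φ : ℝ → ℂ := fun x => expMono (-w) 0 x * prim b k x with hφ
  have hφc : Continuous φ := (continuous_expMono _ _).mul hPc
  have hφI : Integrable φ (ivl b) := (memLp_of_continuous hφc).integrable (by norm_num)
  have hmul : ∀ (l l' : ℂ) (ν : ℕ) (x : ℝ),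
      expMono l 0 x * expMono l' ν x = expMono (l + l') ν x := by
    intro l l' ν x
    simp only [expMono, pow_zero, one_mul]
    rw [mul_left_comm, ← Complex.exp_add]
    ring_nf
  have hrel : ∀ l ν, Complex.I * (l - w) * ∫ x, φ x * expMono l ν x ∂(ivl b)
      + ν * ∫ x, φ x * expMono l (ν - 1) x ∂(ivl b) = - ∫ x, h x * expMono l ν x ∂(ivl b) := by
    intro l ν
    have hp := integral_prim_mul hkI hk0 (hasDerivAt_expMono (l - w) ν)
      (((continuous_expMono _ _).const_mul _).add ((continuous_expMono _ _).const_mul _))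
    have e1 : ∀ x, k x * expMono (l - w) ν x = h x * expMono l ν x := by
      intro x
      rw [hk]
      simp only [mul_assoc, hmul, add_sub_cancel]
    have e2 : ∀ μ x, φ x * expMono l μ x = prim b k x * expMono (l - w) μ x := by
      intro μ x
      have := hmul (-w) l μ x
      rw [neg_add_eq_sub] at this
      rw [← this, hφ]; ring
    simp only [e1] at hp
    rw [← hp, ← integral_const_mul, ← integral_const_mul, ← integral_add]
    · refine integral_congr_ae (Filter.Eventually.of_forall fun x => ?_)
      simp only [e2]
      ring
    · exact (integrable_mul_continuous hφI (continuous_expMono _ _)).const_mul _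
    · exact (integrable_mul_continuous hφI (continuous_expMono _ _)).const_mul _
  set c : ℂ := Complex.I * (l₀ - w) with hc
  set ψ : ℝ → ℂ := fun x => h x + c * φ x with hψ
  have hψL : MemLp ψ 2 (ivl b) := hL.add ((memLp_of_continuous hφc).const_mul c)
  have hsplit : ∀ l ν, ∫ x, ψ x * expMono l ν x ∂(ivl b) =
      ∫ x, h x * expMono l ν x ∂(ivl b) + c * ∫ x, φ x * expMono l ν x ∂(ivl b) := by
    intro l ν
    rw [← integral_const_mul, ← integral_add]
    · refine integral_congr_ae (Filter.Eventually.of_forall fun x => ?_)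
      simp only [hψ]
      ring
    · exact integrable_mul_continuous hI (continuous_expMono _ _)
    · exact (integrable_mul_continuous hφI (continuous_expMono _ _)).const_mul _
  -- `⟨ψ, (D - i w) p⟩ = ⟨h, (D - i l₀) p⟩` for `p = expMono l ν`
  have hψrel : ∀ l ν, Complex.I * (l - w) * ∫ x, ψ x * expMono l ν x ∂(ivl b)
      + ν * ∫ x, ψ x * expMono l (ν - 1) x ∂(ivl b) =
      Complex.I * (l - l₀) * ∫ x, h x * expMono l ν x ∂(ivl b)
      + ν * ∫ x, h x * expMono l (ν - 1) x ∂(ivl b) := by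
    intro l ν
    rw [hsplit, hsplit, hc]
    linear_combination Complex.I * (l₀ - w) * hrel l ν
  have hψann : ∀ l ν, ν < m l → ∫ x, ψ x * expMono l ν x ∂(ivl b) = 0 := by
    intro l ν hν
    by_cases hlw : l = w
    · subst hlw
      have hr := hψrel l (ν + 1)
      rw [hann l (ν + 1) (by omega), Nat.add_sub_cancel, hann l ν (by omega)] at hr
      simp only [sub_self, mul_zero, zero_mul, zero_add] at hr
      exact (mul_eq_zero.1 hr).resolve_left (by exact_mod_cast Nat.succ_ne_zero ν)
    · induction ν with
      | zero =>
        have hr := hψrel l 0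
        have hz : Complex.I * (l - l₀) * ∫ x, h x * expMono l 0 x ∂(ivl b) = 0 := by
          by_cases hl : l = l₀
          · simp [hl]
          · rw [hann l 0 (by rw [hoth l hl hlw]; exact hν), mul_zero]
        rw [hz] at hr
        simp only [Nat.cast_zero, zero_mul, add_zero] at hr
        exact (mul_eq_zero.1 hr).resolve_left
          (mul_ne_zero Complex.I_ne_zero (sub_ne_zero.2 hlw))
      | succ ν ih =>
        have hr := hψrel l (ν + 1)
        rw [Nat.add_sub_cancel, ih (by omega)] at hr
        have hz : Complex.I * (l - l₀) * ∫ x, h x * expMono l (ν + 1) x ∂(ivl b) = 0 := by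
          by_cases hl : l = l₀
          · simp [hl]
          · rw [hann l (ν + 1) (by rw [hoth l hl hlw]; exact hν), mul_zero]
        have hz2 : ∫ x, h x * expMono l ν x ∂(ivl b) = 0 := by
          apply hann
          by_cases hl : l = l₀
          · subst hl; omega
          · rw [hoth l hl hlw]; omega
        rw [hz, hz2] at hr
        simp only [mul_zero, add_zero] at hr
        exact (mul_eq_zero.1 hr).resolve_left
          (mul_ne_zero Complex.I_ne_zero (sub_ne_zero.2 hlw))
  have hψ0 := hm ψ hψL hψann
  have hinv : ∀ x, expMono (-w) 0 x * expMono w 0 x = 1 := by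
    intro x
    rw [hmul]; simp [expMono]
  have hk' : k =ᵐ[ivl b] fun x => -c * prim b k x := by
    filter_upwards [hψ0] with x hx
    have hx' : h x + c * (expMono (-w) 0 x * prim b k x) = 0 := hx
    simp only [hk]
    linear_combination expMono w 0 x * hx' - c * prim b k x * hinv x
  filter_upwards [eq_zero_of_eq_prim c hkI hk'] with x hx
  have hx' : h x * expMono w 0 x = 0 := hx
  have := hinv x
  simp only [Pi.zero_apply]
  linear_combination expMono (-w) 0 x * hx' - h x * hinv x

/-! ### Multiplicities -/

/-- The multiplicity of the value `l` in the sequence `w` (`0` if it occurs infinitely often). -/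
noncomputable def mult (w : ℤ → ℂ) (l : ℂ) : ℕ := {j : ℤ | w j = l}.ncard

/-- The number of earlier occurrences of the value `w k`. -/
noncomputable def rk (w : ℤ → ℂ) (k : ℤ) : ℕ := {j : ℤ | j < k ∧ w j = w k}.ncard

/-- Every value is taken finitely often. -/
def FinFib (w : ℤ → ℂ) : Prop := ∀ l, {j : ℤ | w j = l}.Finite

lemma FinFib.rk_lt {w : ℤ → ℂ} (hw : FinFib w) (k : ℤ) : rk w k < mult w (w k) := by
  refine ncard_lt_ncard ?_ (hw _)
  refine ⟨fun j hj => hj.2, fun h => ?_⟩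
  exact lt_irrefl k (h (show w k = w k from rfl)).1

lemma FinFib.rk_strict {w : ℤ → ℂ} (hw : FinFib w) {i k : ℤ} (hik : i < k) (h : w i = w k) :
    rk w i < rk w k := by
  refine ncard_lt_ncard ⟨fun j hj => ⟨hj.1.trans hik, hj.2.trans h⟩, fun hs => ?_⟩
    ((hw (w k)).subset fun j hj => hj.2)
  exact lt_irrefl i (hs (show i < k ∧ w i = w k from ⟨hik, h⟩)).1

/-- Within a fibre the ranks exhaust all numbers below the multiplicity. -/
lemma FinFib.exists_rk {w : ℤ → ℂ} (hw : FinFib w) {l : ℂ} {ν : ℕ} (hν : ν < mult w l) :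
    ∃ k, w k = l ∧ rk w k = ν := by
  have hs : ∀ k ∈ (hw l).toFinset, w k = l := fun k hk => (hw l).mem_toFinset.1 hk
  have hsurj := Finset.surjOn_of_injOn_of_card_le (s := (hw l).toFinset)
    (t := Finset.range (mult w l)) (rk w)
    (by
      intro k hk
      have hk' := hs k hk
      have := hw.rk_lt k
      rw [hk'] at this
      simpa using this)
    (by
      intro i hi k hk hik
      have hi' := hs i hi
      have hk' := hs k hk
      rcases lt_trichotomy i k with h | h | h
      · exact absurd hik (hw.rk_strict h (hi'.trans hk'.symm)).ne
      · exact h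
      · exact absurd hik (hw.rk_strict h (hk'.trans hi'.symm)).ne')
    (by rw [Finset.card_range, mult, ncard_eq_toFinset_card _ (hw l)])
  obtain ⟨k, hk, hkν⟩ := hsurj (show ν ∈ (Finset.range (mult w l) : Set ℕ) by simpa using hν)
  exact ⟨k, hs k hk, hkν⟩

lemma FinFib.mult_update {w : ℤ → ℂ} (hw : FinFib w) (k : ℤ) (v : ℂ) (hv : w k ≠ v) :
    mult w (w k) = mult (Function.update w k v) (w k) + 1 := by
  have h1 : {j : ℤ | w j = w k} = insert k {j : ℤ | Function.update w k v j = w k} := by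
    ext j
    by_cases hj : j = k
    · simp [hj]
    · simp [hj, Function.update_of_ne hj]
  have hk : k ∉ {j : ℤ | Function.update w k v j = w k} := by
    simpa using hv.symm
  have hfin : {j : ℤ | Function.update w k v j = w k}.Finite :=
    (hw (w k)).subset (by rw [h1]; exact subset_insert _ _)
  rw [mult, h1, ncard_insert_of_notMem hk hfin, mult]

lemma FinFib.update {w : ℤ → ℂ} (hw : FinFib w) (k : ℤ) (v : ℂ) :
    FinFib (Function.update w k v) := by
  intro l
  refine ((hw l).insert k).subset fun j hj => ?_
  by_cases h : j = k
  · exact Or.inl h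
  · right
    simpa [Function.update_of_ne h] using hj

lemma CompleteMult.update {b : ℝ} {w : ℤ → ℂ} (hw : FinFib w) (k : ℤ) (v : ℂ)
    (hc : CompleteMult b (mult w)) : CompleteMult b (mult (Function.update w k v)) := by
  by_cases hv : w k = v
  · rwa [← hv, Function.update_eq_self]
  · refine hc.exchange hv (hw.mult_update k v hv) ?_ ?_
    · have := (hw.update k v).mult_update k (w k) (by simpa using Ne.symm hv)
      simpa using this
    · intro l h1 h2
      unfold mult
      congr 1
      ext j
      by_cases hj : j = k
      · subst hj
        simp [Ne.symm h1, Ne.symm h2]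
      · simp [hj]

lemma CompleteMult.piecewise {b : ℝ} {w w' : ℤ → ℂ} (hw : FinFib w)
    (hc : CompleteMult b (mult w)) (A : Finset ℤ) :
    FinFib (A.piecewise w' w) ∧ CompleteMult b (mult (A.piecewise w' w)) := by
  induction A using Finset.induction_on with
  | empty => simpa using ⟨hw, hc⟩
  | insert k A _ ih =>
    rw [Finset.piecewise_insert]
    exact ⟨ih.1.update _ _, ih.2.update ih.1 _ _⟩

/-! ### Exponential systems as vectors of `L²(-b, b)` -/

/-- The class of `expMono l ν` in `L²(-b, b)`. -/
noncomputable def elem (b : ℝ) (l : ℂ) (ν : ℕ) : Lp ℂ 2 (ivl b) :=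
  (memLp_of_continuous (continuous_expMono l ν)).toLp

lemma coeFn_elem (b : ℝ) (l : ℂ) (ν : ℕ) : elem b l ν =ᵐ[ivl b] expMono l ν :=
  MemLp.coeFn_toLp _

/-- The exponential system with exponents `w`, repeated values giving rise to higher powers. -/
noncomputable def expSystem (b : ℝ) (w : ℤ → ℂ) (k : ℤ) : Lp ℂ 2 (ivl b) := elem b (w k) (rk w k)

lemma systemRieszBasis_iff {b : ℝ} {w : ℤ → ℂ} {f : ℤ → ℝ → ℂ}
    (hf : ∀ k x, f k x = expMono (w k) (rk w k) x) :
    SystemRieszBasis b f ↔ IsRiesz (expSystem b w) := by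
  have hae : ∀ (k : ℤ) (g : Lp ℂ 2 (ivl b)), g =ᵐ[ivl b] f k ↔ g = expSystem b w k := by
    intro k g
    rw [show f k = expMono (w k) (rk w k) from funext (hf k), expSystem]
    constructor
    · intro h
      exact Lp.ext (h.trans (coeFn_elem b _ _).symm)
    · rintro rfl
      exact coeFn_elem b _ _
  constructor
  · rintro ⟨u, T, hT⟩
    exact ⟨u, T.toUnit, T.toUnit.isUnit, fun k => (hae k _).1 (hT k)⟩
  · rintro ⟨u, T, ⟨V, rfl⟩, hT⟩
    exact ⟨u, ContinuousLinearEquiv.ofUnit V, fun k => (hae k _).2 (hT k)⟩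

lemma inner_elem (b : ℝ) (h : Lp ℂ 2 (ivl b)) (l : ℂ) (ν : ℕ) :
    inner ℂ h (elem b l ν) = ∫ x, (starRingEnd ℂ) (h x) * expMono l ν x ∂(ivl b) := by
  rw [L2.inner_def]
  refine integral_congr_ae ?_
  filter_upwards [coeFn_elem b l ν] with x hx
  rw [hx, RCLike.inner_apply, mul_comm]

lemma totalSystem_iff {b : ℝ} {w : ℤ → ℂ} (hw : FinFib w) :
    TotalSystem (expSystem b w) ↔ CompleteMult b (mult w) := by
  constructor
  · intro ht η hη hann
    have hη' : MemLp (fun x => (starRingEnd ℂ) (η x)) 2 (ivl b) := hη.star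
    have h0 : hη'.toLp = 0 := by
      apply ht
      intro k
      rw [expSystem, inner_elem, ← hann (w k) (rk w k) (hw.rk_lt k)]
      refine integral_congr_ae ?_
      filter_upwards [hη'.coeFn_toLp] with x hx
      rw [hx, Complex.conj_conj]
    have h1 := hη'.coeFn_toLp
    rw [h0] at h1
    filter_upwards [h1, Lp.coeFn_zero ℂ 2 (ivl b)] with x hx hx0
    rw [hx0] at hx
    simpa using hx.symm
  · intro hc h hh
    have hη : MemLp (fun x => (starRingEnd ℂ) (h x)) 2 (ivl b) := (Lp.memLp h).star
    have h0 := hc _ hη (by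
      intro l ν hν
      obtain ⟨k, rfl, rfl⟩ := hw.exists_rk hν
      rw [← inner_elem]
      exact hh k)
    rw [Lp.eq_zero_iff_ae_eq_zero]
    filter_upwards [h0] with x hx
    simpa using hx

/-- Near the integers, `l ↦ exp (i l x)` is Lipschitz as a map into `L²(-b, b)`, with a constant
independent of the integer. -/
lemma exists_norm_elem_sub_le (b : ℝ) (hb : 0 < b) : ∃ C : ℝ, 0 ≤ C ∧ ∀ (n : ℤ) (s t : ℂ),
    ‖s‖ < 1 / 2 → ‖t‖ < 1 / 2 → ‖elem b (n + s) 0 - elem b (n + t) 0‖ ≤ C * ‖s - t‖ := by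
  set M : ℝ := (measureUnivNNReal (ivl b) : ℝ) ^ ((2 : ENNReal).toReal)⁻¹ with hM
  refine ⟨M * (Real.exp b * (b * Real.exp b)), by positivity, fun n s t hs ht => ?_⟩
  rw [mul_assoc]
  refine Lp.norm_le_of_ae_bound (by positivity) ?_
  filter_upwards [Lp.coeFn_sub (elem b (n + s) 0) (elem b (n + t) 0), coeFn_elem b (n + s) 0,
    coeFn_elem b (n + t) 0, ae_restrict_mem measurableSet_Ioo] with x h1 h2 h3 hx
  rw [h1, Pi.sub_apply, h2, h3]
  have hxb : |x| ≤ b := (abs_lt.2 hx).le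
  have hst : ‖s - t‖ ≤ 1 := (norm_sub_le s t).trans (by linarith)
  have hfac : expMono (n + s) 0 x - expMono (n + t) 0 x =
      Complex.exp (Complex.I * (n + t) * x) * (Complex.exp (Complex.I * (s - t) * x) - 1) := by
    rw [mul_sub, ← Complex.exp_add]
    simp only [expMono, pow_zero, one_mul, mul_one]
    ring_nf
  have hn : ‖Complex.I * (s - t) * x‖ = ‖s - t‖ * |x| := by simp
  have hle : ‖Complex.exp (Complex.I * (s - t) * x) - 1‖ ≤ ‖s - t‖ * b * Real.exp b := by
    have := Complex.norm_exp_sub_sum_le_norm_mul_exp (Complex.I * (s - t) * x) 1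
    simp only [Finset.range_one, Finset.sum_singleton, pow_zero, Nat.factorial_zero, Nat.cast_one,
      div_one, pow_one, hn] at this
    refine this.trans ?_
    have h5 : ‖s - t‖ * |x| ≤ 1 * b := by gcongr
    rw [one_mul] at h5
    gcongr
  have hexp : ‖Complex.exp (Complex.I * (n + t) * x)‖ ≤ Real.exp b := by
    rw [Complex.norm_exp]
    apply Real.exp_le_exp.2
    have h6 : (Complex.I * (n + t) * x).re = -t.im * x := by simp
    rw [h6]
    have h7 : |t.im| ≤ 1 := (Complex.abs_im_le_norm t).trans (by linarith)
    calc -t.im * x ≤ |-t.im * x| := le_abs_self _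
      _ = |t.im| * |x| := by rw [abs_mul, abs_neg]
      _ ≤ 1 * b := by gcongr
      _ = b := one_mul b
  rw [hfac, norm_mul]
  calc _ ≤ Real.exp b * (‖s - t‖ * b * Real.exp b) := by gcongr
    _ = _ := by ring

/-! ### Transfer between two quadratically close systems of exponents -/

lemma finite_half_le {κ : ℤ → ℂ} (hκ : Summable fun k => ‖κ k‖ ^ 2) :
    {k | 1 / 2 ≤ ‖κ k‖}.Finite := by
  have h := hκ.tendsto_cofinite_zero
  have h2 := h.eventually_lt_const (show (0 : ℝ) < 1 / 4 by norm_num)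
  refine (Filter.eventually_cofinite.1 h2).subset fun k hk => ?_
  have hk' : 1 / 2 ≤ ‖κ k‖ := hk
  simp only [not_lt, mem_ofPred_eq]
  nlinarith

lemma int_eq_of_near {a c : ℤ} {s t : ℂ} (hs : ‖s‖ < 1 / 2) (ht : ‖t‖ < 1 / 2)
    (h : (a : ℂ) + s = c + t) : a = c := by
  have h1 : ((a - c : ℤ) : ℂ) = t - s := by push_cast; linear_combination h
  have h2 : ‖((a - c : ℤ) : ℂ)‖ < 1 := by
    rw [h1]; exact (norm_sub_le _ _).trans_lt (by linarith)
  rw [Complex.norm_intCast] at h2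
  have h3 : |a - c| < 1 := by exact_mod_cast h2
  have := Int.abs_lt_one_iff.1 h3
  omega

lemma finFib_of_summable {n : ℤ → ℤ} (hn : Function.Injective n) {κ : ℤ → ℂ}
    (hκ : Summable fun k => ‖κ k‖ ^ 2) : FinFib fun k => (n k : ℂ) + κ k := by
  intro l
  have hsub : ({j | (n j : ℂ) + κ j = l} \ {k | 1 / 2 ≤ ‖κ k‖}).Subsingleton := by
    intro i hi j hj
    have hi1 : (n i : ℂ) + κ i = l := hi.1
    have hj1 : (n j : ℂ) + κ j = l := hj.1
    exact hn (int_eq_of_near (not_le.1 hi.2) (not_le.1 hj.2) (hi1.trans hj1.symm))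
  exact ((finite_half_le hκ).union hsub.finite).subset fun j hj => by
    by_cases h : 1 / 2 ≤ ‖κ j‖
    · exact Or.inl h
    · exact Or.inr ⟨hj, h⟩

/-- The Riesz basis property passes between exponents `n + κ` and `n + κ'`. The intermediate
system `v` uses the old exponents on a large finite set and the new ones elsewhere: it is a small
perturbation of the old system, and a finite modification of the new one. -/
lemma riesz_transfer {b : ℝ} (hb : 0 < b) {n : ℤ → ℤ} (hn : Function.Injective n) {κ κ' : ℤ → ℂ}
    (hκ : Summable fun k => ‖κ k‖ ^ 2) (hκ' : Summable fun k => ‖κ' k‖ ^ 2)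
    (hR : IsRiesz (expSystem b fun k => (n k : ℂ) + κ k)) :
    IsRiesz (expSystem b fun k => (n k : ℂ) + κ' k) := by
  classical
  set w : ℤ → ℂ := fun k => (n k : ℂ) + κ k with hw
  set w' : ℤ → ℂ := fun k => (n k : ℂ) + κ' k with hw'
  have hF' : FinFib w' := finFib_of_summable hn hκ'
  have hF : FinFib w := finFib_of_summable hn hκ
  -- Outside a finite set `A₀` both perturbations are small and no exponent is shared.
  obtain ⟨A₀, hA₀⟩ : ∃ A₀ : Finset ℤ, ∀ k ∉ A₀, ‖κ k‖ < 1 / 2 ∧ ‖κ' k‖ < 1 / 2 ∧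
      ∀ j, j ≠ k → w k ≠ w j ∧ w k ≠ w' j ∧ w' k ≠ w j ∧ w' k ≠ w' j := by
    have hB : ({k | 1 / 2 ≤ ‖κ k‖} ∪ {k | 1 / 2 ≤ ‖κ' k‖}).Finite :=
      (finite_half_le hκ).union (finite_half_le hκ')
    set B := {k | 1 / 2 ≤ ‖κ k‖} ∪ {k | 1 / 2 ≤ ‖κ' k‖} with hBdef
    have hU : (⋃ j ∈ B, ({k | w k = w j} ∪ {k | w k = w' j} ∪
        ({k | w' k = w j} ∪ {k | w' k = w' j}))).Finite :=
      hB.biUnion fun j _ => (((hF _).union (hF _)).union ((hF' _).union (hF' _)))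
    refine ⟨(hB.union hU).toFinset, fun k hk => ?_⟩
    rw [Set.Finite.mem_toFinset, mem_union, not_or] at hk
    obtain ⟨hk1, hk2⟩ := hk
    have hsmall : ∀ j ∉ B, ‖κ j‖ < 1 / 2 ∧ ‖κ' j‖ < 1 / 2 := by
      intro j hj
      rw [hBdef, mem_union, not_or] at hj
      exact ⟨not_le.1 hj.1, not_le.1 hj.2⟩
    have hks := hsmall k hk1
    refine ⟨hks.1, hks.2, fun j hjk => ?_⟩
    by_cases hj : j ∈ B
    · have hk3 : k ∉ ({k | w k = w j} ∪ {k | w k = w' j} ∪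
        ({k | w' k = w j} ∪ {k | w' k = w' j})) := fun h => hk2 (mem_biUnion hj h)
      simp only [mem_union, mem_ofPred_eq, not_or] at hk3
      exact ⟨hk3.1.1, hk3.1.2, hk3.2.1, hk3.2.2⟩
    · have hjs := hsmall j hj
      have hne : n k ≠ n j := fun h => hjk (hn h).symm
      exact ⟨fun h => hne (int_eq_of_near hks.1 hjs.1 h),
        fun h => hne (int_eq_of_near hks.1 hjs.2 h),
        fun h => hne (int_eq_of_near hks.2 hjs.1 h),
        fun h => hne (int_eq_of_near hks.2 hjs.2 h)⟩
  obtain ⟨C, hC0, hC⟩ := exists_norm_elem_sub_le b hb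
  let d : ℤ → ℝ := fun k => if k ∈ A₀ then 0 else ‖elem b (w' k) 0 - elem b (w k) 0‖ ^ 2
  have hd : Summable d := by
    have hsum : Summable fun k => C ^ 2 * (2 * (‖κ' k‖ ^ 2 + ‖κ k‖ ^ 2)) :=
      ((hκ'.add hκ).mul_left 2).mul_left _
    refine hsum.of_nonneg_of_le (fun k => ?_) (fun k => ?_)
    · simp only [d]; split_ifs <;> positivity
    · simp only [d]
      split_ifs with hk
      · positivity
      · have h1 := hC (n k) (κ' k) (κ k) (hA₀ k hk).2.1 (hA₀ k hk).1
        have h2 := norm_sub_le (κ' k) (κ k)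
        have h3 : ‖κ' k - κ k‖ ^ 2 ≤ 2 * (‖κ' k‖ ^ 2 + ‖κ k‖ ^ 2) := by
          have h4 : ‖κ' k - κ k‖ ^ 2 ≤ (‖κ' k‖ + ‖κ k‖) ^ 2 := by gcongr
          nlinarith [sq_nonneg (‖κ' k‖ - ‖κ k‖)]
        calc ‖elem b (w' k) 0 - elem b (w k) 0‖ ^ 2 ≤ (C * ‖κ' k - κ k‖) ^ 2 := by gcongr
          _ = C ^ 2 * ‖κ' k - κ k‖ ^ 2 := by ring
          _ ≤ _ := by gcongr
  obtain ⟨ε, hε, hpert⟩ := hR.exists_perturb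
  obtain ⟨A, hAA, hAε⟩ : ∃ A : Finset ℤ, A₀ ⊆ A ∧
      ∑' k, ((A : Set ℤ)ᶜ).indicator d k < ε := by
    have h1 := (tendsto_tsum_compl_atTop_zero d).eventually_lt_const hε
    obtain ⟨A, h2, h3⟩ := (h1.and (Filter.eventually_ge_atTop A₀)).exists
    refine ⟨A, h3, ?_⟩
    rw [← tsum_subtype]
    exact h2
  have hsep : ∀ k ∉ A, ∀ j, j ≠ k → w k ≠ w j ∧ w k ≠ w' j ∧ w' k ≠ w j ∧ w' k ≠ w' j :=
    fun k hk => (hA₀ k (fun h => hk (hAA h))).2.2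
  let v : ℤ → ℂ := A.piecewise w w'
  have hvin : ∀ k ∈ A, v k = w k := fun k hk => Finset.piecewise_eq_of_mem _ _ _ hk
  have hvout : ∀ k ∉ A, v k = w' k := fun k hk => Finset.piecewise_eq_of_notMem _ _ _ hk
  have hFv : FinFib v := by
    intro l
    refine ((hF l).union (hF' l)).subset fun j hj => ?_
    have hj' : v j = l := hj
    by_cases h : j ∈ A
    · exact Or.inl ((hvin j h).symm.trans hj')
    · exact Or.inr ((hvout j h).symm.trans hj')
  have hrk0 : ∀ (y : ℤ → ℂ) (k : ℤ), (∀ j, j ≠ k → y j ≠ y k) → rk y k = 0 := by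
    intro y k h
    have : {j : ℤ | j < k ∧ y j = y k} = ∅ :=
      eq_empty_of_forall_notMem fun j hj => h j hj.1.ne hj.2
    rw [rk, this, ncard_empty]
  have hrkw : ∀ k ∉ A, rk w k = 0 := fun k hk => hrk0 _ _ fun j hj => (hsep k hk j hj).1.symm
  have hrkw' : ∀ k ∉ A, rk w' k = 0 := fun k hk =>
    hrk0 _ _ fun j hj => (hsep k hk j hj).2.2.2.symm
  have hrkv : ∀ k ∉ A, rk v k = 0 := by
    intro k hk
    refine hrk0 _ _ fun j hj => ?_
    rw [hvout k hk]
    by_cases h : j ∈ A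
    · rw [hvin j h]; exact (hsep k hk j hj).2.2.1.symm
    · rw [hvout j h]; exact (hsep k hk j hj).2.2.2.symm
  have hrkvA : ∀ k ∈ A, rk v k = rk w k := by
    intro k hk
    unfold rk
    congr 1
    ext j
    simp only [mem_ofPred_eq, and_congr_right_iff]
    intro hjk
    rw [hvin k hk]
    by_cases h : j ∈ A
    · rw [hvin j h]
    · rw [hvout j h]
      exact iff_of_false (hsep j h k hjk.ne').2.2.1 (hsep j h k hjk.ne').1
  have hdiff : (fun k => ‖expSystem b v k - expSystem b w k‖ ^ 2) =
      ((A : Set ℤ)ᶜ).indicator d := by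
    funext k
    by_cases hk : k ∈ A
    · rw [indicator_of_notMem (by simpa using hk), expSystem, expSystem, hvin k hk, hrkvA k hk]
      simp
    · rw [indicator_of_mem (by simpa using hk), expSystem, expSystem, hvout k hk, hrkv k hk,
        hrkw k hk]
      simp only [d]
      rw [if_neg fun h => hk (hAA h)]
  have hRv : IsRiesz (expSystem b v) := by
    apply hpert
    · rw [hdiff]; exact hd.indicator _
    · rw [hdiff]; exact hAε
  refine hRv.of_finite_change A ?_ ?_
  · intro k hk
    rw [expSystem, expSystem, hvout k hk, hrkv k hk, hrkw' k hk]
  · rw [totalSystem_iff hF']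
    have hcv : CompleteMult b (mult v) := (totalSystem_iff hFv).1 hRv.totalSystem
    have h1 := (hcv.piecewise (w' := w') hFv A).2
    have h2 : A.piecewise w' v = w' := by
      funext k
      by_cases hk : k ∈ A
      · rw [Finset.piecewise_eq_of_mem _ _ _ hk]
      · rw [Finset.piecewise_eq_of_notMem _ _ _ hk, hvout k hk]
    rwa [h2] at h1

/-- with `z_k = n_k + κ_k`, `(κ_k) ∈ ℓ²`, equal values among the `z_k`
neighboring, and `e_{k+ν}(x) = x^ν e^{i z_k x}` (`ν` less than the multiplicity),
the system `{e_k}` is a Riesz basis of `L²(−b, b)` iff `{e^{i n_k x}}` is. -/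
theorem statement8 (b : ℝ) (hb : 0 < b)
    (n : ℤ → ℤ) (hn : StrictMono n)
    (κ : ℤ → ℂ) (hκ : Summable (fun k : ℤ => ‖κ k‖ ^ 2))
    (z : ℤ → ℂ) (hz : ∀ k : ℤ, z k = (n k : ℂ) + κ k)
    -- equal values among the `z_k` are neighboring:
    (hnb : ∀ i j k : ℤ, i ≤ j → j ≤ k → z i = z k → z j = z i)
    (e : ℤ → ℝ → ℂ)
    (he : ∀ k : ℤ, ∀ x : ℝ,
      e k x = (x : ℂ) ^ ({j : ℤ | j < k ∧ z j = z k}.ncard)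
        * Complex.exp (Complex.I * z k * (x : ℂ))) :
    SystemRieszBasis b e ↔
      SystemRieszBasis b (fun k x => Complex.exp (Complex.I * (n k : ℂ) * (x : ℂ))) := by
  have hf0 : Summable fun _ : ℤ => ‖(0 : ℂ)‖ ^ 2 := by simp
  have h1 : SystemRieszBasis b e ↔ IsRiesz (expSystem b fun k => (n k : ℂ) + κ k) := by
    rw [← funext hz]
    exact systemRieszBasis_iff he
  have h2 : SystemRieszBasis b (fun k x => Complex.exp (Complex.I * (n k : ℂ) * (x : ℂ))) ↔
      IsRiesz (expSystem b fun k => (n k : ℂ) + 0) := by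
    apply systemRieszBasis_iff
    intro k x
    have h3 : rk (fun k => (n k : ℂ) + 0) k = 0 := by
      have : {j : ℤ | j < k ∧ (n j : ℂ) + 0 = n k + 0} = ∅ := by
        refine eq_empty_of_forall_notMem fun j hj => ?_
        have hj2 : (n j : ℂ) = n k := by simpa using hj.2
        exact hj.1.ne (hn.injective (by exact_mod_cast hj2))
      rw [rk, this, ncard_empty]
    rw [h3]
    simp [expMono]
  rw [h1, h2]
  exact ⟨riesz_transfer hb hn.injective hκ hf0, riesz_transfer hb hn.injective hf0 hκ⟩
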